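/- arXiv:2502.14114 — 5 statements merged into one kernel-verified Lean document; each statement's English description precedes it below -/
import Mathlib

section
/- Let n, s, t be positive natural numbers with s ≥ n and t ≥ n. Let A be a real n × s matrix and B a real n × t matrix. Define the broadcast vectorized tensor product A ⊗̄ B as the real n × (s·t) matrix whose entry in row i and column (α, β) equals A i α · B i β. If no row of B is the zero vector and A has rank n (full row rank), then A ⊗̄ B has rank n. -/
/-- Broadcast vectorized tensor product: `(A ⊗̄ B) i (α, β) = A i α * B i β`. -/
def bvtp {n s t : ℕ} (A : Matrix (Fin n) (Fin s) ℝ) (B : Matrix (Fin n) (Fin t) ℝ) :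
    Matrix (Fin n) (Fin s × Fin t) ℝ :=
  Matrix.of fun i p => A i p.1 * B i p.2

theorem linearIndependent_pi_smul {ι κ R M : Type*} [Ring R] [NoZeroDivisors R]
    [AddCommGroup M] [Module R M] {v : ι → M} (hv : LinearIndependent R v)
    {c : ι → κ → R} (hc : ∀ i, c i ≠ 0) :
    LinearIndependent R fun i k => c i k • v i := by
  rw [linearIndependent_iff'] at hv ⊢
  intro s g hg i hi
  obtain ⟨k, hk⟩ := Function.ne_iff.mp (hc i)
  have sum_at_k : ∑ j ∈ s, (g j * c j k) • v j = 0 := by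
    simpa [mul_smul] using congrFun hg k
  exact (mul_eq_zero.mp (hv s _ sum_at_k i hi)).resolve_right hk

theorem linearIndependent_prod_mul {ι σ τ R : Type*} [CommRing R] [NoZeroDivisors R]
    {a : ι → σ → R} (ha : LinearIndependent R a) {b : ι → τ → R} (hb : ∀ i, b i ≠ 0) :
    LinearIndependent R fun i (p : σ × τ) => a i p.1 * b i p.2 := by
  let currySwap : (σ × τ → R) ≃ₗ[R] (τ → σ → R) :=
    LinearEquiv.funCongrLeft R R (Equiv.prodComm τ σ) ≪≫ₗ LinearEquiv.curry R R τ σ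
  have currySwap_mul : currySwap ∘ (fun i p => a i p.1 * b i p.2) = fun i k => b i k • a i := by
    ext i k j
    exact mul_comm _ _
  refine .of_comp currySwap.toLinearMap ?_
  rw [LinearEquiv.coe_coe, currySwap_mul]
  exact linearIndependent_pi_smul ha hb

theorem linearIndependent_row_iff_rank_eq_card {m n K : Type*} [Field K] [Fintype m] [Fintype n]
    {A : Matrix m n K} : LinearIndependent K A.row ↔ A.rank = Fintype.card m := by
  rw [linearIndependent_iff_card_eq_finrank_span, Set.finrank, A.rank_eq_finrank_span_row, eq_comm]

theorem bvtp_full_rank_general {ι σ τ K : Type*} [Field K] [Fintype ι] [Fintype σ] [Fintype τ]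
    {A : Matrix ι σ K} {B : Matrix ι τ K} (hB : ∀ i, B i ≠ 0) (hA : A.rank = Fintype.card ι) :
    (Matrix.of fun i (p : σ × τ) => A i p.1 * B i p.2).rank = Fintype.card ι :=
  linearIndependent_row_iff_rank_eq_card.mp <|
    linearIndependent_prod_mul (linearIndependent_row_iff_rank_eq_card.mpr hA) hB

theorem bvtp_full_rank {n s t : ℕ} (hn : 0 < n) (hs : n ≤ s) (ht : n ≤ t)
    (A : Matrix (Fin n) (Fin s) ℝ) (B : Matrix (Fin n) (Fin t) ℝ)
    (hB : ∀ i, B i ≠ 0) (hA : A.rank = n) :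
    (bvtp A B).rank = n := by
  simpa only [bvtp, Fintype.card_fin] using
    bvtp_full_rank_general hB (hA.trans (Fintype.card_fin n).symm)
end

section
/- Let σ : ℝ^M → ℝ be a surjective continuously differentiable function, and let X be a real M × N matrix with rank N (so N ≤ M). Then for every y ∈ ℝ^N there exist a matrix W ∈ ℝ^{M×M} and a vector b ∈ ℝ^M such that σ(W X_i + b) = y_i for every i = 1, …, N, where X_i denotes the i-th column of X. That is, the fixed nonlinearity affine network on σ is solvable. -/
open Matrix

/-!
Linear maps take arbitrary values on a linearly independent family, and the columns of a matrix of
full column rank form one. So choose a preimage of each label under `σ`, fix any bias `b`, and let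
`W` send each data point to the chosen preimage minus `b`.
-/

theorem exists_linearMap_apply_eq_of_linearIndependent {K V V' ι : Type*} [DivisionRing K]
    [AddCommGroup V] [Module K V] [AddCommGroup V'] [Module K V'] {v : ι → V}
    (hv : LinearIndependent K v) (z : ι → V') : ∃ f : V →ₗ[K] V', ∀ i, f (v i) = z i := by
  obtain ⟨coords, hcoords⟩ :=
    (Finsupp.linearCombination K v).exists_leftInverse_of_injective
      (LinearMap.ker_eq_bot.mpr hv)
  refine ⟨Finsupp.linearCombination K z ∘ₗ coords, fun i ↦ ?_⟩
  have coords_apply : coords (v i) = Finsupp.single i 1 := by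
    simpa using LinearMap.congr_fun hcoords (Finsupp.single i 1)
  simp [coords_apply]

section FullColumnRank

variable {K m n : Type*} [Field K]

theorem rank_eq_card_iff_linearIndependent_col [Fintype n] {X : Matrix m n K} :
    X.rank = Fintype.card n ↔ LinearIndependent K X.col := by
  rw [linearIndependent_iff_card_eq_finrank_span, Set.finrank, X.rank_eq_finrank_span_cols, eq_comm]

variable {p : Type*} [Fintype m]

theorem exists_mulVec_col_eq_of_linearIndependent_col {X : Matrix m n K}
    (hX : LinearIndependent K X.col) (z : n → p → K) :
    ∃ W : Matrix p m K, ∀ i, W *ᵥ X.col i = z i := by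
  classical
  obtain ⟨f, hf⟩ := exists_linearMap_apply_eq_of_linearIndependent hX z
  exact ⟨f.toMatrix', fun i ↦ by rw [LinearMap.toMatrix'_mulVec, hf]⟩

theorem fixed_nonlinearity_affine_network_solvable_general {α : Type*} {σ : (p → K) → α}
    (hσ : Function.Surjective σ) {X : Matrix m n K} (hX : LinearIndependent K X.col)
    (b : p → K) (y : n → α) : ∃ W : Matrix p m K, ∀ i, σ (W *ᵥ X.col i + b) = y i := by
  choose z hz using fun i ↦ hσ (y i)
  obtain ⟨W, hW⟩ := exists_mulVec_col_eq_of_linearIndependent_col hX fun i ↦ z i - b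
  exact ⟨W, fun i ↦ by rw [hW, sub_add_cancel, hz]⟩

end FullColumnRank

theorem fixed_nonlinearity_affine_network_solvable {M N : ℕ}
    (σ : (Fin M → ℝ) → ℝ) (hσ : ContDiff ℝ 1 σ) (hsurj : Function.Surjective σ)
    (X : Matrix (Fin M) (Fin N) ℝ) (hrank : X.rank = N) :
    ∀ y : Fin N → ℝ, ∃ (W : Matrix (Fin M) (Fin M) ℝ) (b : Fin M → ℝ),
      ∀ i : Fin N, σ (W.mulVec (fun j => X j i) + b) = y i := by
  have hX := rank_eq_card_iff_linearIndependent_col.mp (hrank.trans (Fintype.card_fin N).symm)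
  exact fun y ↦
    (fixed_nonlinearity_affine_network_solvable_general hsurj hX 0 y).imp fun _ hW ↦ ⟨0, hW⟩
end

section
/- Let X be a real M × N matrix with columns X_i (N ≤ M), let W ∈ ℝ^{M×M} and b ∈ ℝ^M, and suppose the points W X_1 + b, …, W X_N + b ∈ ℝ^M are pairwise distinct. Then there exists a polynomial function σ : ℝ^M → ℝ such that the Fréchet derivative at (W, b) of the map (W', b') ↦ (σ(W' X_i + b'))_{i=1,…,N} from ℝ^{M×M} × ℝ^M to ℝ^N is surjective, i.e., the training Jacobian D is full rank N. If moreover no column X_i is the zero vector, then σ can be chosen so that additionally the Jacobian of the bias-omitted map W' ↦ (σ(W' X_i))_{i=1,…,N} at W is surjective. -/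
open Matrix

/-!
Dedicate to each sample `i` its own output coordinate `τ i`, and choose the polynomial so that its
gradient at the point reached by sample `i` is the coordinate vector `e_{τ i}`. The rows of the
Jacobian then live in pairwise disjoint blocks of the parameters, so they are independent as soon
as none of them vanishes.

To serve the biased points `z i = W xᵢ + b` and the unbiased points `w i = W xᵢ` with a single
polynomial, the two assignments have to agree wherever `w i = z j`. The relation `w i = z j` is a
partial injection `i ↦ j`, so it extends to a permutation `π` of the samples, and the gradient
`e_{τ (π i)}` is prescribed at `w i`.
-/

section Interpolation

variable {σ K : Type*} [Field K]

theorem exists_mvPolynomial_eval_eq_one_eval_eq_zero {r s : σ → K} (hrs : r ≠ s) :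
    ∃ L : MvPolynomial σ K, L.eval s = 1 ∧ L.eval r = 0 := by
  obtain ⟨α, hα⟩ := Function.ne_iff.1 hrs.symm
  exact ⟨.C (s α - r α)⁻¹ * (.X α - .C (r α)), by simp [sub_ne_zero.2 hα], by simp⟩

theorem exists_mvPolynomial_eval_eq_one_forall_mem_eval_eq_zero (S : Finset (σ → K)) (s : σ → K) :
    ∃ L : MvPolynomial σ K, L.eval s = 1 ∧ ∀ r ∈ S, r ≠ s → L.eval r = 0 := by
  classical
  choose! L hL using fun r (hrs : r ≠ s) ↦ exists_mvPolynomial_eval_eq_one_eval_eq_zero hrs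
  refine ⟨∏ r ∈ S.erase s, L r, ?_, fun r hr hrs ↦ ?_⟩
  · rw [map_prod]
    exact Finset.prod_eq_one fun r hr ↦ (hL r (Finset.ne_of_mem_erase hr)).1
  · rw [map_prod]
    exact Finset.prod_eq_zero (Finset.mem_erase.2 ⟨hrs, hr⟩) (hL r hrs).2

theorem exists_mvPolynomial_forall_mem_eval_pderiv_eq [Finite σ] (S : Finset (σ → K))
    (G : (σ → K) → σ → K) :
    ∃ p : MvPolynomial σ K, ∀ s ∈ S, ∀ α, (p.pderiv α).eval s = G s α := by
  classical
  have := Fintype.ofFinite σ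
  choose L hL_self hL_ne using exists_mvPolynomial_eval_eq_one_forall_mem_eval_eq_zero S
  -- The squares make each summand vanish to second order at the nodes other than its own.
  refine ⟨∑ r ∈ S, L r ^ 2 * ∑ β, .C (G r β) * (.X β - .C (r β)), fun s hs α ↦ ?_⟩
  rw [map_sum, map_sum, Finset.sum_eq_single_of_mem s hs]
  · simp [hL_self, MvPolynomial.pderiv_X, Pi.single_apply, apply_ite]
  · intro r _ hrs
    simp [hL_ne r s hs hrs.symm]

end Interpolation

section TwoFamilies

variable {ι : Type*} [Finite ι]

theorem exists_perm_forall_apply_eq_of_injective {E : Type*} {z w : ι → E}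
    (hz : Function.Injective z) (hw : Function.Injective w) :
    ∃ π : Equiv.Perm ι, ∀ i j, w i = z j → π i = j := by
  classical
  let toZ : {i // w i ∈ Set.range z} → ι := fun i ↦ i.2.choose
  have hz_toZ : ∀ i, z (toZ i) = w i := fun i ↦ i.2.choose_spec
  have htoZ : Function.Injective toZ := fun i k h ↦
    Subtype.ext (hw (by rw [← hz_toZ i, ← hz_toZ k, h]))
  refine ⟨(Equiv.ofInjective toZ htoZ).extendSubtype, fun i j hij ↦ ?_⟩
  rw [Equiv.extendSubtype_apply_of_mem _ i ⟨j, hij.symm⟩]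
  exact hz ((hz_toZ _).trans hij)

theorem exists_mvPolynomial_eval_pderiv_eq_and_perm {σ K : Type*} [Field K] [Finite σ]
    {z w : ι → σ → K} (hz : Function.Injective z) (hw : Function.Injective w) (g : ι → σ → K) :
    ∃ (p : MvPolynomial σ K) (π : Equiv.Perm ι),
      (∀ i α, (p.pderiv α).eval (z i) = g i α) ∧
        ∀ i α, (p.pderiv α).eval (w i) = g (π i) α := by
  obtain ⟨π, hπ⟩ := exists_perm_forall_apply_eq_of_injective hz hw
  let G : (σ → K) → σ → K := Function.extend z g (Function.extend w (g ∘ π) 0)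
  have hGz : ∀ i, G (z i) = g i := hz.extend_apply _ _
  have hGw : ∀ i, G (w i) = g (π i) := fun i ↦ by
    by_cases hi : ∃ j, z j = w i
    · obtain ⟨j, hj⟩ := hi
      rw [← hj, hGz, hπ i j hj.symm]
    · exact (Function.extend_apply' _ _ _ hi).trans (hw.extend_apply _ _ _)
  obtain ⟨p, hp⟩ := exists_mvPolynomial_forall_mem_eval_pderiv_eq
    ((Set.finite_range z).union (Set.finite_range w)).toFinset G
  refine ⟨p, π, fun i α ↦ ?_, fun i α ↦ ?_⟩
  · rw [hp (z i) (by simp), hGz]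
  · rw [hp (w i) (by simp), hGw]

end TwoFamilies

section Jacobian

variable {𝕜 E ι σ : Type*} [NontriviallyNormedField 𝕜] [NormedAddCommGroup E] [NormedSpace 𝕜 E]

theorem hasFDerivAt_mvPolynomial_eval [Fintype σ] (p : MvPolynomial σ 𝕜) (x : σ → 𝕜) :
    HasFDerivAt (fun x : σ → 𝕜 ↦ p.eval x)
      (∑ α, (p.pderiv α).eval x • (ContinuousLinearMap.proj α : (σ → 𝕜) →L[𝕜] 𝕜)) x := by
  classical
  induction p using MvPolynomial.induction_on with
  | C a =>
    simp only [MvPolynomial.eval_C]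
    refine (hasFDerivAt_const a x).congr_fderiv ?_
    ext v
    simp
  | add p q hp hq =>
    simp only [map_add]
    refine (hp.fun_add hq).congr_fderiv ?_
    ext v
    simp [add_mul, Finset.sum_add_distrib]
  | mul_X p β hp =>
    simp only [map_mul, MvPolynomial.eval_X]
    refine (hp.fun_mul (hasFDerivAt_apply β x)).congr_fderiv ?_
    ext v
    simp [MvPolynomial.pderiv_X, Pi.single_apply, apply_ite, add_mul, Finset.sum_add_distrib,
      Finset.mul_sum, mul_assoc]

theorem fderiv_mvPolynomial_eval_comp_apply [Finite ι] [Fintype σ]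
    (p : MvPolynomial σ 𝕜) (A : ι → E →L[𝕜] (σ → 𝕜)) (x v : E) (i : ι) :
    fderiv 𝕜 (fun y i ↦ p.eval (A i y)) x v i = ∑ α, (p.pderiv α).eval (A i x) * A i v α := by
  have := Fintype.ofFinite ι
  have hderiv := hasFDerivAt_pi.2 fun i ↦
    (hasFDerivAt_mvPolynomial_eval p (A i x)).comp x (A i).hasFDerivAt
  simpa using congrFun (DFunLike.congr_fun hderiv.fderiv v) i

theorem surjective_fderiv_of_eval_pderiv_eq_single [Finite ι] [Finite σ] [DecidableEq σ]
    {p : MvPolynomial σ 𝕜} {A : ι → E →L[𝕜] (σ → 𝕜)} {x : E} {τ : ι → σ}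
    (hp : ∀ i α, (p.pderiv α).eval (A i x) = (Pi.single (τ i) 1 : σ → 𝕜) α)
    (hA : Function.Surjective fun v i ↦ A i v (τ i)) :
    Function.Surjective (fderiv 𝕜 (fun y i ↦ p.eval (A i y)) x) := by
  have := Fintype.ofFinite σ
  refine fun y ↦ (hA y).imp fun v hv ↦ funext fun i ↦ ?_
  simp [fderiv_mvPolynomial_eval_comp_apply, hp, ← hv, Pi.single_apply]

end Jacobian

section Layers

variable {𝕜 ι κ σ : Type*} [NontriviallyNormedField 𝕜] [Fintype κ]

/-- The map `W ↦ W x` sending the weights of a linear layer to its output at a fixed input `x`.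
Weights are functions `σ → κ → 𝕜`, which carry the product norm, rather than matrices. -/
def linearLayer (σ : Type*) (x : κ → 𝕜) : (σ → κ → 𝕜) →L[𝕜] (σ → 𝕜) :=
  .pi fun α ↦ ∑ j, x j • (ContinuousLinearMap.proj j : (κ → 𝕜) →L[𝕜] 𝕜).comp (.proj α)

/-- The map `(W, b) ↦ W x + b` sending the weights and the bias of an affine layer to its output at
a fixed input `x`. -/
def affineLayer (σ : Type*) (x : κ → 𝕜) : (σ → κ → 𝕜) × (σ → 𝕜) →L[𝕜] (σ → 𝕜) :=
  (linearLayer σ x).coprod (.id 𝕜 _)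

theorem linearLayer_apply (x : κ → 𝕜) (W : σ → κ → 𝕜) :
    linearLayer σ x W = fun α ↦ ∑ j, W α j * x j := by
  ext α
  simp [linearLayer, mul_comm]

theorem affineLayer_apply (x : κ → 𝕜) (q : (σ → κ → 𝕜) × (σ → 𝕜)) :
    affineLayer σ x q = fun α ↦ (∑ j, q.1 α j * x j) + q.2 α := by
  ext α
  simp [affineLayer, linearLayer_apply]

theorem surjective_linearLayer_apply {τ : ι → σ} (hτ : Function.Injective τ) {x : ι → κ → 𝕜}
    (hx : ∀ i, x i ≠ 0) :
    Function.Surjective fun (W : σ → κ → 𝕜) i ↦ linearLayer σ (x i) W (τ i) := by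
  classical
  have hdual : ∀ i, ∃ u : κ → 𝕜, ∑ j, u j * x i j = 1 := fun i ↦ by
    obtain ⟨j, hj⟩ := Function.ne_iff.1 (hx i)
    exact ⟨Pi.single j (x i j)⁻¹, by simpa [Pi.single_apply] using inv_mul_cancel₀ hj⟩
  choose u hu using hdual
  refine fun y ↦ ⟨Function.extend τ (fun i ↦ y i • u i) 0, funext fun i ↦ ?_⟩
  simp [linearLayer_apply, hτ.extend_apply, mul_assoc, ← Finset.mul_sum, hu]

theorem surjective_affineLayer_apply {τ : ι → σ} (hτ : Function.Injective τ) (x : ι → κ → 𝕜) :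
    Function.Surjective
      fun (q : (σ → κ → 𝕜) × (σ → 𝕜)) i ↦ affineLayer σ (x i) q (τ i) :=
  fun y ↦ ⟨(0, Function.extend τ y 0), funext fun i ↦ by
    simp [affineLayer_apply, hτ.extend_apply]⟩

end Layers

theorem exists_polynomial_full_rank_jacobian_general {𝕜 ι κ σ : Type*}
    [NontriviallyNormedField 𝕜] [Fintype ι] [Fintype κ] [Fintype σ]
    (X : Matrix κ ι 𝕜) (hcard : Fintype.card ι ≤ Fintype.card σ)
    (W : σ → κ → 𝕜) (b : σ → 𝕜)
    (hdist : Function.Injective fun i α ↦ (∑ j, W α j * X j i) + b α) :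
    ∃ p : MvPolynomial σ 𝕜,
      Function.Surjective
        (fderiv 𝕜
          (fun (q : (σ → κ → 𝕜) × (σ → 𝕜)) i ↦ p.eval fun α ↦ (∑ j, q.1 α j * X j i) + q.2 α)
          (W, b)) ∧
      ((∀ i, (fun j ↦ X j i) ≠ 0) →
        Function.Surjective
          (fderiv 𝕜 (fun (W' : σ → κ → 𝕜) i ↦ p.eval fun α ↦ ∑ j, W' α j * X j i) W)) := by
  classical
  obtain ⟨τ⟩ := Function.Embedding.nonempty_of_card_le hcard
  have hdist_unbiased : Function.Injective fun i α ↦ ∑ j, W α j * X j i :=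
    Function.Injective.of_comp (f := (· + b)) hdist
  obtain ⟨p, π, hp_biased, hp_unbiased⟩ :=
    exists_mvPolynomial_eval_pderiv_eq_and_perm hdist hdist_unbiased
      fun i ↦ Pi.single (τ i) (1 : 𝕜)
  refine ⟨p, ?_, fun hX ↦ ?_⟩
  · simp only [← affineLayer_apply (fun j ↦ X j _)]
    refine surjective_fderiv_of_eval_pderiv_eq_single (fun i ↦ ?_)
      (surjective_affineLayer_apply τ.injective _)
    simpa only [affineLayer_apply] using hp_biased i
  · simp only [← linearLayer_apply (fun j ↦ X j _)]
    refine surjective_fderiv_of_eval_pderiv_eq_single (fun i ↦ ?_)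
      (surjective_linearLayer_apply (τ.injective.comp π.injective) hX)
    simpa only [linearLayer_apply, Function.comp_apply] using hp_unbiased i

theorem exists_polynomial_full_rank_jacobian {M N : ℕ}
    (X : Matrix (Fin M) (Fin N) ℝ) (hNM : N ≤ M)
    (W : Fin M → Fin M → ℝ) (b : Fin M → ℝ)
    (hdist : Function.Injective
      (fun i : Fin N => fun α : Fin M => (∑ j, W α j * X j i) + b α)) :
    (∃ p : MvPolynomial (Fin M) ℝ,
        Function.Surjective
          (fderiv ℝ
            (fun q : (Fin M → Fin M → ℝ) × (Fin M → ℝ) =>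
              fun i : Fin N =>
                MvPolynomial.eval (fun α => (∑ j, q.1 α j * X j i) + q.2 α) p)
            (W, b))) ∧
      ((∀ i : Fin N, (fun j => X j i) ≠ 0) →
        ∃ p : MvPolynomial (Fin M) ℝ,
          Function.Surjective
            (fderiv ℝ
              (fun q : (Fin M → Fin M → ℝ) × (Fin M → ℝ) =>
                fun i : Fin N =>
                  MvPolynomial.eval (fun α => (∑ j, q.1 α j * X j i) + q.2 α) p)
              (W, b)) ∧
          Function.Surjective
            (fderiv ℝ
              (fun W' : Fin M → Fin M → ℝ =>
                fun i : Fin N =>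
                  MvPolynomial.eval (fun α => ∑ j, W' α j * X j i) p)
              W)) := by
  obtain ⟨p, haffine, hlinear⟩ :=
    exists_polynomial_full_rank_jacobian_general X (by simpa using hNM) W b hdist
  exact ⟨⟨p, haffine⟩, fun hX ↦ ⟨p, haffine, hlinear hX⟩⟩
end

section
/- Let σ : ℝ → ℝ be continuously differentiable with σ'(t) ≠ 0 for all t, applied coordinatewise as a map Σ : ℝ^M → ℝ^M. Let L ≥ 1 and consider the scalar-output deep network F(θ)(x) = w · Σ(W_L(⋯ Σ(W_1 x + b_1) ⋯) + b_L) + c with parameters θ = (W_1, …, W_L, b_1, …, b_L, w, c), where W_ℓ ∈ ℝ^{M×M}, b_ℓ ∈ ℝ^M, w ∈ ℝ^M, c ∈ ℝ. Let X ∈ ℝ^{M×N} have rank N with columns X_i. Then at any parameter point θ at which W_2, …, W_L are invertible and w ≠ 0, the Fréchet derivative of the map θ ↦ (F(θ)(X_1), …, F(θ)(X_N)) ∈ ℝ^N is surjective; that is, the training Jacobian D is full rank N. -/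
open Matrix

/-- Hidden-layer recursion with weight matrices given as plain functions:
`fwdFun M σ W b ℓ x` is the output of the `ℓ`-th hidden layer on input `x`, with the scalar
activation `σ` applied coordinatewise. -/
def fwdFun (M : ℕ) (σ : ℝ → ℝ) (W : ℕ → Fin M → Fin M → ℝ) (b : ℕ → Fin M → ℝ) :
    ℕ → (Fin M → ℝ) → Fin M → ℝ
  | 0, x => x
  | ℓ + 1, x => fun α => σ ((∑ j, W ℓ α j * fwdFun M σ W b ℓ x j) + b ℓ α)

/-!
As a function of the first weight matrix alone, the network output at `x` is `g (W₁ x)`, where the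
tail `g : ℝ^M → ℝ` is a composition of maps with surjective derivative: translations and
coordinatewise activations, multiplications by the invertible `W₂, …, W_L`, and the nonzero
functional `w`. Since the inputs `X_i` are linearly independent, the vectors `W₁ X_i` can be
perturbed independently of each other, so perturbing `W₁` alone already moves the `N` outputs
in every direction of `ℝ^N`.
-/

section SurjectiveDerivative

variable {𝕜 : Type*} [NontriviallyNormedField 𝕜]
  {E F G : Type*} [NormedAddCommGroup E] [NormedSpace 𝕜 E]
  [NormedAddCommGroup F] [NormedSpace 𝕜 F] [NormedAddCommGroup G] [NormedSpace 𝕜 G]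

variable (𝕜) in
/-- The pointwise submersion condition of calculus: `f` is differentiable at `x` with surjective
derivative. Unlike for `IsSubmersionAt`, neither smoothness near `x` nor a complement of the kernel
of the derivative is required. -/
structure HasSurjectiveFDerivAt (f : E → F) (x : E) : Prop where
  differentiableAt : DifferentiableAt 𝕜 f x
  surjective_fderiv : Function.Surjective (fderiv 𝕜 f x)

namespace HasSurjectiveFDerivAt

theorem of_hasFDerivAt {f : E → F} {f' : E →L[𝕜] F} {x : E} (hf : HasFDerivAt f f' x)
    (hf' : Function.Surjective f') : HasSurjectiveFDerivAt 𝕜 f x :=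
  ⟨hf.differentiableAt, by rwa [hf.fderiv]⟩

theorem of_continuousLinearMap (f : E →L[𝕜] F) (hf : Function.Surjective f) (x : E) :
    HasSurjectiveFDerivAt 𝕜 f x :=
  of_hasFDerivAt f.hasFDerivAt hf

theorem of_linearMap [CompleteSpace 𝕜] [FiniteDimensional 𝕜 E] (f : E →ₗ[𝕜] F)
    (hf : Function.Surjective f) (x : E) : HasSurjectiveFDerivAt 𝕜 f x :=
  of_continuousLinearMap f.toContinuousLinearMap hf x

theorem of_deriv_ne_zero {f : 𝕜 → 𝕜} {t : 𝕜} (hf : deriv f t ≠ 0) :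
    HasSurjectiveFDerivAt 𝕜 f t where
  differentiableAt := differentiableAt_of_deriv_ne_zero hf
  surjective_fderiv y := ⟨y / deriv f t, by
    rw [fderiv_eq_smul_deriv, smul_eq_mul, div_mul_cancel₀ _ hf]⟩

theorem comp {g : F → G} {f : E → F} {x : E} (hg : HasSurjectiveFDerivAt 𝕜 g (f x))
    (hf : HasSurjectiveFDerivAt 𝕜 f x) : HasSurjectiveFDerivAt 𝕜 (g ∘ f) x :=
  of_hasFDerivAt (hg.differentiableAt.hasFDerivAt.comp x hf.differentiableAt.hasFDerivAt)
    (hg.surjective_fderiv.comp hf.surjective_fderiv)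

theorem of_comp {g : F → G} {f : E → F} {x : E} (hgf : HasSurjectiveFDerivAt 𝕜 (g ∘ f) x)
    (hg : DifferentiableAt 𝕜 g (f x)) (hf : DifferentiableAt 𝕜 f x) :
    HasSurjectiveFDerivAt 𝕜 g (f x) where
  differentiableAt := hg
  surjective_fderiv := by
    have hsurj := hgf.surjective_fderiv
    rw [fderiv_comp x hg hf, ContinuousLinearMap.coe_comp] at hsurj
    exact hsurj.of_comp

theorem add_const {f : E → F} {x : E} (hf : HasSurjectiveFDerivAt 𝕜 f x) (c : F) :
    HasSurjectiveFDerivAt 𝕜 (fun y => f y + c) x :=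
  of_hasFDerivAt (hf.differentiableAt.hasFDerivAt.add_const c) hf.surjective_fderiv

theorem piMap {ι : Type*} [Fintype ι] {E F : ι → Type*}
    [∀ i, NormedAddCommGroup (E i)] [∀ i, NormedSpace 𝕜 (E i)]
    [∀ i, NormedAddCommGroup (F i)] [∀ i, NormedSpace 𝕜 (F i)]
    {f : ∀ i, E i → F i} {x : ∀ i, E i} (hf : ∀ i, HasSurjectiveFDerivAt 𝕜 (f i) (x i)) :
    HasSurjectiveFDerivAt 𝕜 (Pi.map f) x := by
  have hderiv : HasFDerivAt (Pi.map f)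
      (ContinuousLinearMap.piMap fun i => fderiv 𝕜 (f i) (x i)) x :=
    hasFDerivAt_pi'' fun i =>
      (hf i).differentiableAt.hasFDerivAt.comp x (hasFDerivAt_apply i x)
  exact of_hasFDerivAt hderiv (Function.Surjective.piMap fun i => (hf i).surjective_fderiv)

end HasSurjectiveFDerivAt

end SurjectiveDerivative

section LinearIndependentColumns

variable {K m n ι : Type*} [Field K]

theorem linearIndependent_col_of_rank_eq_card [Fintype ι] {X : Matrix n ι K}
    (hX : X.rank = Fintype.card ι) : LinearIndependent K X.col := by
  rw [linearIndependent_iff_card_eq_finrank_span, Set.finrank, ← X.rank_eq_finrank_span_cols, hX]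

theorem surjective_mulVec_of_linearIndependent [Fintype n] {x : ι → n → K}
    (hx : LinearIndependent K x) : Function.Surjective fun (A : Matrix m n K) i => A *ᵥ x i := by
  classical
  intro y
  obtain ⟨f, hf⟩ := ((Module.Basis.span hx).constr K y).exists_extend
  refine ⟨LinearMap.toMatrix' f, funext fun i => ?_⟩
  calc LinearMap.toMatrix' f *ᵥ x i = f (Module.Basis.span hx i) := by
        rw [LinearMap.toMatrix'_mulVec, Module.Basis.span_apply]
    _ = y i := by
        rw [← Submodule.subtype_apply, ← LinearMap.comp_apply, hf, Module.Basis.constr_basis]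

end LinearIndependentColumns

section Layers

/-- Coordinatewise activation `σ` of the preactivation `z` shifted by the bias `b`. Separating it
from the weight multiplication exhibits the first layer as a function of `W₁ x`. -/
def biasedActivation {m : Type*} (σ : ℝ → ℝ) (b z : m → ℝ) : m → ℝ :=
  Pi.map (fun _ => σ) (z + b)

variable {M : ℕ} {σ : ℝ → ℝ}

theorem fwdFun_succ (σ : ℝ → ℝ) (W : ℕ → Fin M → Fin M → ℝ) (b : ℕ → Fin M → ℝ) (ℓ : ℕ)
    (x : Fin M → ℝ) :
    fwdFun M σ W b (ℓ + 1) x =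
      biasedActivation σ (b ℓ) (Matrix.of (W ℓ) *ᵥ fwdFun M σ W b ℓ x) :=
  rfl

theorem fwdFun_succ_eq_fwdFun_tail (σ : ℝ → ℝ) (W : ℕ → Fin M → Fin M → ℝ)
    (b : ℕ → Fin M → ℝ) (ℓ : ℕ) (x : Fin M → ℝ) :
    fwdFun M σ W b (ℓ + 1) x =
      fwdFun M σ (fun k => W (k + 1)) (fun k => b (k + 1)) ℓ
        (biasedActivation σ (b 0) (Matrix.of (W 0) *ᵥ x)) := by
  induction ℓ with
  | zero => rfl
  | succ ℓ ih => rw [fwdFun_succ, ih, fwdFun_succ]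

theorem hasSurjectiveFDerivAt_biasedActivation {m : Type*} [Fintype m]
    (hσ' : ∀ t, deriv σ t ≠ 0) (b z : m → ℝ) :
    HasSurjectiveFDerivAt ℝ (biasedActivation σ b) z :=
  have hshift : HasSurjectiveFDerivAt ℝ (fun y => y + b) z :=
    (HasSurjectiveFDerivAt.of_continuousLinearMap (.id ℝ _) Function.surjective_id z).add_const b
  (HasSurjectiveFDerivAt.piMap fun _ => .of_deriv_ne_zero (hσ' _)).comp hshift

theorem hasSurjectiveFDerivAt_mulVec {m n : Type*} [Fintype m] [Fintype n] {A : Matrix m n ℝ}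
    (hA : Function.Surjective A.mulVec) (x : n → ℝ) : HasSurjectiveFDerivAt ℝ A.mulVec x :=
  .of_linearMap A.mulVecLin hA x

theorem hasSurjectiveFDerivAt_fwdFun (hσ' : ∀ t, deriv σ t ≠ 0)
    {W : ℕ → Fin M → Fin M → ℝ} (b : ℕ → Fin M → ℝ) {ℓ : ℕ}
    (hW : ∀ k < ℓ, IsUnit (Matrix.of (W k))) (x : Fin M → ℝ) :
    HasSurjectiveFDerivAt ℝ (fwdFun M σ W b ℓ) x := by
  induction ℓ with
  | zero => exact .of_continuousLinearMap (.id ℝ _) Function.surjective_id x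
  | succ ℓ ih =>
    have hmul := hasSurjectiveFDerivAt_mulVec
      (Matrix.mulVec_surjective_iff_isUnit.2 (hW ℓ ℓ.lt_succ_self)) (fwdFun M σ W b ℓ x)
    exact (hasSurjectiveFDerivAt_biasedActivation hσ' (b ℓ) _).comp
      (hmul.comp (ih fun k hk => hW k (hk.trans ℓ.lt_succ_self)))

theorem differentiable_fwdFun {E : Type*} [NormedAddCommGroup E] [NormedSpace ℝ E]
    (hσ : Differentiable ℝ σ) {W : E → ℕ → Fin M → Fin M → ℝ} {b : E → ℕ → Fin M → ℝ}
    (hW : ∀ k, Differentiable ℝ fun p => W p k) (hb : ∀ k, Differentiable ℝ fun p => b p k)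
    (ℓ : ℕ) (x : Fin M → ℝ) : Differentiable ℝ fun p => fwdFun M σ (W p) (b p) ℓ x := by
  induction ℓ with
  | zero => exact differentiable_const x
  | succ ℓ ih =>
    simp only [fwdFun]
    fun_prop

end Layers

section Network

variable {M L : ℕ} {σ : ℝ → ℝ}

/-- The parameters `(W, b, w, c)` of a network of width `M` with `L` hidden layers; the entries
`W ℓ` and `b ℓ` are `W_{ℓ+1}` and `b_{ℓ+1}` in one-based notation. -/
abbrev NetworkParams (M L : ℕ) : Type :=
  (Fin L → Fin M → Fin M → ℝ) × (Fin L → Fin M → ℝ) × (Fin M → ℝ) × ℝ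

/-- Extension of a finite family by zero to all of `ℕ`, the index type used by `fwdFun`. -/
def zeroExtend {A : Type*} [Zero A] (v : Fin L → A) (k : ℕ) : A :=
  if h : k < L then v ⟨k, h⟩ else 0

/-- The output `F(θ)(x)` of the scalar network with parameters `θ` on the input `x`. -/
def scalarNetwork (σ : ℝ → ℝ) (θ : NetworkParams M L) (x : Fin M → ℝ) : ℝ :=
  θ.2.2.1 ⬝ᵥ fwdFun M σ (zeroExtend θ.1) (zeroExtend θ.2.1) L x + θ.2.2.2

/-- The part of a scalar network with `L + 1` hidden layers downstream of the first weight matrix,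
as a function of `z = W₁ x`. -/
def scalarNetworkTail (σ : ℝ → ℝ) (θ : NetworkParams M (L + 1)) (z : Fin M → ℝ) : ℝ :=
  θ.2.2.1 ⬝ᵥ fwdFun M σ (fun k => zeroExtend θ.1 (k + 1)) (fun k => zeroExtend θ.2.1 (k + 1)) L
    (biasedActivation σ (θ.2.1 0) z) + θ.2.2.2

theorem zeroExtend_apply_of_lt {A : Type*} [Zero A] (v : Fin L → A) {k : ℕ} (hk : k < L) :
    zeroExtend v k = v ⟨k, hk⟩ :=
  dif_pos hk

theorem zeroExtend_update_zero_succ {A : Type*} [Zero A] (v : Fin (L + 1) → A) (a : A) (k : ℕ) :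
    zeroExtend (Function.update v 0 a) (k + 1) = zeroExtend v (k + 1) := by
  simp [zeroExtend, Fin.ext_iff]

theorem scalarNetwork_update_zero (σ : ℝ → ℝ) (θ : NetworkParams M (L + 1))
    (W₁ : Fin M → Fin M → ℝ) (x : Fin M → ℝ) :
    scalarNetwork σ (Function.update θ.1 0 W₁, θ.2) x =
      scalarNetworkTail σ θ (Matrix.of W₁ *ᵥ x) := by
  simp only [scalarNetwork, scalarNetworkTail, fwdFun_succ_eq_fwdFun_tail,
    zeroExtend_update_zero_succ, zeroExtend_apply_of_lt _ L.succ_pos, Fin.mk_zero,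
    Function.update_self]

theorem differentiable_zeroExtend {A : Type*} [NormedAddCommGroup A] [NormedSpace ℝ A] (k : ℕ) :
    Differentiable ℝ fun v : Fin L → A => zeroExtend v k := by
  unfold zeroExtend
  split_ifs <;> fun_prop

theorem differentiable_scalarNetwork (hσ : Differentiable ℝ σ) (x : Fin M → ℝ) :
    Differentiable ℝ fun θ : NetworkParams M L => scalarNetwork σ θ x := by
  have hfwd : Differentiable ℝ fun θ : NetworkParams M L =>
      fwdFun M σ (zeroExtend θ.1) (zeroExtend θ.2.1) L x :=
    differentiable_fwdFun hσ (fun k => (differentiable_zeroExtend k).comp differentiable_fst)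
      (fun k => (differentiable_zeroExtend k).comp (differentiable_fst.comp differentiable_snd)) L x
  simp only [scalarNetwork, dotProduct]
  fun_prop

theorem hasSurjectiveFDerivAt_dotProduct {n : Type*} [Fintype n] {w : n → ℝ} (hw : w ≠ 0)
    (z : n → ℝ) : HasSurjectiveFDerivAt ℝ (fun y => w ⬝ᵥ y) z := by
  have hne : dotProductBilin ℝ ℝ w ≠ 0 := fun h =>
    hw (dotProduct_eq_zero w fun y => LinearMap.congr_fun h y)
  exact .of_linearMap _ (LinearMap.surjective hne) z

theorem hasSurjectiveFDerivAt_scalarNetworkTail (hσ' : ∀ t, deriv σ t ≠ 0)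
    {θ : NetworkParams M (L + 1)}
    (hW : ∀ ℓ : Fin (L + 1), 1 ≤ (ℓ : ℕ) → IsUnit (Matrix.of (θ.1 ℓ))) (hw : θ.2.2.1 ≠ 0)
    (z : Fin M → ℝ) : HasSurjectiveFDerivAt ℝ (scalarNetworkTail σ θ) z := by
  have hunit : ∀ k < L, IsUnit (Matrix.of (zeroExtend θ.1 (k + 1))) := fun k hk => by
    rw [zeroExtend_apply_of_lt _ (Nat.succ_lt_succ hk)]
    exact hW _ k.succ_pos
  have hhidden := (hasSurjectiveFDerivAt_fwdFun hσ'
    (fun k => zeroExtend θ.2.1 (k + 1)) hunit _).comp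
    (hasSurjectiveFDerivAt_biasedActivation hσ' (θ.2.1 0) z)
  exact ((hasSurjectiveFDerivAt_dotProduct hw _).comp hhidden).add_const θ.2.2.2

theorem hasSurjectiveFDerivAt_scalarNetwork_update_zero {ι : Type*} [Fintype ι]
    (hσ' : ∀ t, deriv σ t ≠ 0) {x : ι → Fin M → ℝ} (hx : LinearIndependent ℝ x)
    {θ : NetworkParams M (L + 1)}
    (hW : ∀ ℓ : Fin (L + 1), 1 ≤ (ℓ : ℕ) → IsUnit (Matrix.of (θ.1 ℓ))) (hw : θ.2.2.1 ≠ 0)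
    (W₁ : Fin M → Fin M → ℝ) :
    HasSurjectiveFDerivAt ℝ
      (fun W i => scalarNetwork σ (Function.update θ.1 0 W, θ.2) (x i)) W₁ := by
  let evalInputs : (Fin M → Fin M → ℝ) →ₗ[ℝ] ι → Fin M → ℝ :=
    LinearMap.pi fun i => (Matrix.mulVecBilin ℝ ℝ).flip (x i)
  have heval : HasSurjectiveFDerivAt ℝ evalInputs W₁ :=
    .of_linearMap evalInputs (surjective_mulVec_of_linearIndependent hx) W₁
  simp only [scalarNetwork_update_zero]
  exact (HasSurjectiveFDerivAt.piMap fun i =>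
    hasSurjectiveFDerivAt_scalarNetworkTail hσ' hW hw (evalInputs W₁ i)).comp heval

theorem deep_scalar_network_jacobian_full_rank_general {ι : Type*} [Fintype ι] (hL : 1 ≤ L)
    (hσ' : ∀ t, deriv σ t ≠ 0) {x : ι → Fin M → ℝ} (hx : LinearIndependent ℝ x)
    (θ : NetworkParams M L) (hW : ∀ ℓ : Fin L, 1 ≤ (ℓ : ℕ) → IsUnit (Matrix.of (θ.1 ℓ)))
    (hw : θ.2.2.1 ≠ 0) :
    HasSurjectiveFDerivAt ℝ (fun (p : NetworkParams M L) i => scalarNetwork σ p (x i)) θ := by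
  obtain ⟨n, rfl⟩ := Nat.exists_eq_add_of_le' hL
  have hσ : Differentiable ℝ σ := fun t => differentiableAt_of_deriv_ne_zero (hσ' t)
  have houtputs : Differentiable ℝ
      fun (p : NetworkParams M (n + 1)) i => scalarNetwork σ p (x i) :=
    differentiable_pi.2 fun i => differentiable_scalarNetwork hσ (x i)
  have hinclude : DifferentiableAt ℝ (fun W => (Function.update θ.1 0 W, θ.2)) (θ.1 0) :=
    (hasFDerivAt_update θ.1 (θ.1 0)).differentiableAt.prodMk (differentiableAt_const θ.2)
  have hθ : (Function.update θ.1 0 (θ.1 0), θ.2) = θ := by rw [Function.update_eq_self]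
  rw [← hθ]
  exact (hasSurjectiveFDerivAt_scalarNetwork_update_zero hσ' hx hW hw (θ.1 0)).of_comp
    (f := fun W => (Function.update θ.1 0 W, θ.2)) (houtputs _) hinclude

end Network

theorem deep_scalar_network_jacobian_full_rank {M N L : ℕ} (hL : 1 ≤ L)
    (σ : ℝ → ℝ) (hσ : ContDiff ℝ 1 σ) (hσ' : ∀ t, deriv σ t ≠ 0)
    (X : Matrix (Fin M) (Fin N) ℝ) (hrank : X.rank = N)
    (θ : (Fin L → Fin M → Fin M → ℝ) × (Fin L → Fin M → ℝ) × (Fin M → ℝ) × ℝ)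
    (hW : ∀ ℓ : Fin L, 1 ≤ (ℓ : ℕ) → IsUnit (Matrix.of (θ.1 ℓ)))
    (hw : θ.2.2.1 ≠ 0) :
    Function.Surjective
      (fderiv ℝ
        (fun p : (Fin L → Fin M → Fin M → ℝ) × (Fin L → Fin M → ℝ) × (Fin M → ℝ) × ℝ =>
          fun i : Fin N =>
            (∑ k, p.2.2.1 k *
              fwdFun M σ
                (fun ℓ => if h : ℓ < L then p.1 ⟨ℓ, h⟩ else 0)
                (fun ℓ => if h : ℓ < L then p.2.1 ⟨ℓ, h⟩ else 0)
                L (fun j => X j i) k) + p.2.2.2)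
        θ) := by
  have hX : LinearIndependent ℝ X.col :=
    linearIndependent_col_of_rank_eq_card (hrank.trans (Fintype.card_fin N).symm)
  exact (deep_scalar_network_jacobian_full_rank_general hL hσ' hX θ hW hw).surjective_fderiv
end

section
/- Let Σ : ℝ^M → ℝ^M be continuously differentiable with surjective (hence invertible) Fréchet derivative at every point, let X ∈ ℝ^{M×N} have rank N with columns X_i, and let w ∈ ℝ^M with w ≠ 0. Consider the two-layer scalar network f(x) = ⟨w, Σ(W x + B)⟩ with parameters (w, W, B) ∈ ℝ^M × ℝ^{M×M} × ℝ^M. Then at any (W, B), the Fréchet derivative of the map (w, W, B) ↦ (f(X_1), …, f(X_N)) ∈ ℝ^N is surjective; that is, the training Jacobian D = [Σ(WX+B), (w ⋅ dΣ) ⊗̄ Xᵀ, w ⋅ dΣ] has full rank N. -/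
open Matrix

/-!
The weights of the first layer alone already move the outputs in every direction. Varying `W` by
`V` changes the `i`-th output to first order by `w ⬝ dΣ (V Xᵢ)`, the derivative being taken at the
`i`-th pre-activation. The functional `w ⬝ dΣ` is nonzero, so any prescribed change of the `i`-th
output is its value at some vector `uᵢ`. Since `X` has full column rank it has a left inverse `Y`,
and the matrix `V = U Y`, where `U` has columns `uᵢ`, satisfies `V Xᵢ = uᵢ` for all `i` at once.
-/

theorem exists_mul_eq_one_of_rank_eq_card {m n K : Type*} [Fintype m] [Fintype n] [DecidableEq n]
    [Field K] {A : Matrix m n K} (hA : A.rank = Fintype.card n) :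
    ∃ Y : Matrix n m K, Y * A = 1 := by
  rw [← vecMul_surjective_iff_exists_left_inverse]
  have range_eq_top : LinearMap.range A.vecMulLinear = ⊤ := by
    apply Submodule.eq_top_of_finrank_eq
    rw [range_vecMulLinear, ← rank_eq_finrank_span_row, hA, Module.finrank_fintype_fun_eq_card]
  exact LinearMap.range_eq_top.mp range_eq_top

theorem exists_forall_mulVec_col_eq {m n p K : Type*} [Fintype m] [Fintype n] [Field K]
    {A : Matrix m n K} (hA : A.rank = Fintype.card n) (u : n → p → K) :
    ∃ V : Matrix p m K, ∀ i, V *ᵥ A.col i = u i := by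
  classical
  obtain ⟨Y, hY⟩ := exists_mul_eq_one_of_rank_eq_card hA
  refine ⟨(of u)ᵀ * Y, fun i ↦ ?_⟩
  calc ((of u)ᵀ * Y) *ᵥ A.col i
      = ((of u)ᵀ * Y * A).col i := by rw [← mulVec_single_one, mulVec_mulVec, mulVec_single_one]
    _ = u i := by rw [Matrix.mul_assoc, hY, Matrix.mul_one, col_transpose, of_row]

section DotProduct

variable {𝕜 l : Type*} [NontriviallyNormedField 𝕜] [Fintype l]

/-- The dot product with a fixed vector `w`, as a continuous linear functional. It expresses the
row vector `w ⬝ dΣ` of the training Jacobian as the composite `dotProductL w ∘L dΣ`. -/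
def dotProductL (w : l → 𝕜) : (l → 𝕜) →L[𝕜] 𝕜 where
  toLinearMap := dotProductBilin 𝕜 𝕜 w
  cont := continuous_const.dotProduct continuous_id

@[simp]
theorem dotProductL_apply (w v : l → 𝕜) : dotProductL w v = w ⬝ᵥ v := rfl

theorem dotProductL_comp_ne_zero {E : Type*} [AddCommGroup E] [Module 𝕜 E] [TopologicalSpace E]
    {w : l → 𝕜} (hw : w ≠ 0) {T : E →L[𝕜] l → 𝕜} (hT : Function.Surjective T) :
    dotProductL w ∘L T ≠ 0 := by
  intro hzero
  refine hw (dotProduct_eq_zero w fun v ↦ ?_)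
  obtain ⟨u, rfl⟩ := hT v
  exact DFunLike.congr_fun hzero u

theorem hasFDerivAt_dotProduct {E : Type*} [NormedAddCommGroup E] [NormedSpace 𝕜 E]
    {f g : E → l → 𝕜} {f' g' : E →L[𝕜] l → 𝕜} {x : E}
    (hf : HasFDerivAt f f' x) (hg : HasFDerivAt g g' x) :
    HasFDerivAt (fun y ↦ f y ⬝ᵥ g y) (dotProductL (g x) ∘L f' + dotProductL (f x) ∘L g') x := by
  have hsum := HasFDerivAt.fun_sum (u := Finset.univ) fun k _ ↦
    (hasFDerivAt_pi'.mp hf k).mul (hasFDerivAt_pi'.mp hg k)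
  refine hsum.congr_fderiv ?_
  ext v
  simp [dotProduct, Finset.sum_add_distrib, add_comm]

end DotProduct

section Network

variable {𝕜 ι κ l n : Type*} [NontriviallyNormedField 𝕜] [Fintype ι] [Fintype l]

/-- The pre-activation `W x + B` of the hidden layer at the input `x`, as a continuous linear map of
the parameters `(W, B)`. The weights `W` are a plain function of two indices, because `Matrix`
carries no global norm. -/
def preactivation (x : ι → 𝕜) : (κ → ι → 𝕜) × (κ → 𝕜) →L[𝕜] κ → 𝕜 where
  toFun q := of q.1 *ᵥ x + q.2
  map_add' q r := by
    rw [Prod.fst_add, Prod.snd_add, ← of_add_of, add_mulVec, add_add_add_comm]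
  map_smul' c q := by
    rw [Prod.smul_fst, Prod.smul_snd, ← smul_of, smul_mulVec, smul_add, RingHom.id_apply]
  cont := (continuous_fst.matrix_mulVec continuous_const).add continuous_snd

theorem preactivation_apply (x : ι → 𝕜) (W : κ → ι → 𝕜) (B : κ → 𝕜) :
    preactivation x (W, B) = of W *ᵥ x + B := rfl

/-- The outputs `⟨w, Σ(W Xᵢ + B)⟩` of the two-layer network with activation `Σ` on the columns
`Xᵢ` of the data matrix, as a function of the parameters `(w, W, B)`. The activation acts
on whole vectors, not coordinatewise, and may change their dimension. -/
def networkOutputs (Sig : (κ → 𝕜) → l → 𝕜) (X : Matrix ι n 𝕜)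
    (p : (l → 𝕜) × (κ → ι → 𝕜) × (κ → 𝕜)) : n → 𝕜 :=
  fun i ↦ p.1 ⬝ᵥ Sig (preactivation (X.col i) p.2)

/-- The training Jacobian `[Σ(WX + B), (w ⬝ dΣ) ⊗̄ Xᵀ, w ⬝ dΣ]`, as a linear map of the variation of
`(w, W, B)`. The hidden features `Σ(W Xᵢ + B)` are passed as `S i`, and the differentials of `Σ` at
the pre-activations `W Xᵢ + B` as `Sig' i`. -/
def trainingJacobian (S : n → l → 𝕜) (Sig' : n → (κ → 𝕜) →L[𝕜] l → 𝕜) (X : Matrix ι n 𝕜)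
    (w : l → 𝕜) : (l → 𝕜) × (κ → ι → 𝕜) × (κ → 𝕜) →L[𝕜] n → 𝕜 :=
  .pi fun i ↦ dotProductL (S i) ∘L .fst 𝕜 _ _ +
    dotProductL w ∘L Sig' i ∘L preactivation (X.col i) ∘L .snd 𝕜 _ _

theorem trainingJacobian_weights_apply (S : n → l → 𝕜) (Sig' : n → (κ → 𝕜) →L[𝕜] l → 𝕜)
    (X : Matrix ι n 𝕜) (w : l → 𝕜) (V : κ → ι → 𝕜) (i : n) :
    trainingJacobian S Sig' X w (0, V, 0) i = w ⬝ᵥ Sig' i (of V *ᵥ X.col i) := by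
  simp [trainingJacobian, preactivation_apply]

theorem trainingJacobian_surjective [Fintype n] (S : n → l → 𝕜)
    {Sig' : n → (κ → 𝕜) →L[𝕜] l → 𝕜} {X : Matrix ι n 𝕜} (hX : X.rank = Fintype.card n)
    {w : l → 𝕜} (hw : ∀ i, dotProductL w ∘L Sig' i ≠ 0) :
    Function.Surjective (trainingJacobian S Sig' X w) := by
  intro y
  have exists_dotProduct_eq (i : n) : ∃ u, w ⬝ᵥ Sig' i u = y i :=
    LinearMap.surjective (f := (dotProductL w ∘L Sig' i).toLinearMap) (mod_cast hw i) (y i)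
  choose u hu using exists_dotProduct_eq
  obtain ⟨V, hV⟩ := exists_forall_mulVec_col_eq hX u
  refine ⟨(0, of.symm V, 0), funext fun i ↦ ?_⟩
  rw [trainingJacobian_weights_apply, Equiv.apply_symm_apply, hV, hu]

theorem hasFDerivAt_networkOutputs [Finite κ] [Finite n] {Sig : (κ → 𝕜) → l → 𝕜}
    {Sig' : n → (κ → 𝕜) →L[𝕜] l → 𝕜} {X : Matrix ι n 𝕜} {w : l → 𝕜} {W : κ → ι → 𝕜} {B : κ → 𝕜}
    (hSig : ∀ i, HasFDerivAt Sig (Sig' i) (preactivation (X.col i) (W, B))) :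
    HasFDerivAt (networkOutputs Sig X)
      (trainingJacobian (fun i ↦ Sig (preactivation (X.col i) (W, B))) Sig' X w) (w, W, B) := by
  cases nonempty_fintype κ
  cases nonempty_fintype n
  rw [trainingJacobian, hasFDerivAt_pi]
  intro i
  have hpreactivation := ContinuousLinearMap.hasFDerivAt (x := (w, W, B))
    (preactivation (X.col i) ∘L .snd 𝕜 (l → 𝕜) ((κ → ι → 𝕜) × (κ → 𝕜)))
  have hfeatures : HasFDerivAt
      (fun p : (l → 𝕜) × (κ → ι → 𝕜) × (κ → 𝕜) ↦ Sig (preactivation (X.col i) p.2))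
      (Sig' i ∘L preactivation (X.col i) ∘L .snd 𝕜 _ _) (w, W, B) :=
    HasFDerivAt.comp (w, W, B) (hSig i) hpreactivation
  have houtput := hasFDerivAt_dotProduct hasFDerivAt_fst hfeatures
  exact houtput

theorem two_layer_network_jacobian_full_rank_general [Finite κ] [Fintype n]
    {Sig : (κ → 𝕜) → l → 𝕜} {Sig' : n → (κ → 𝕜) →L[𝕜] l → 𝕜}
    {X : Matrix ι n 𝕜} (hX : X.rank = Fintype.card n)
    {w : l → 𝕜} {W : κ → ι → 𝕜} {B : κ → 𝕜}
    (hSig : ∀ i, HasFDerivAt Sig (Sig' i) (preactivation (X.col i) (W, B)))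
    (hw : ∀ i, dotProductL w ∘L Sig' i ≠ 0) :
    Function.Surjective (fderiv 𝕜 (networkOutputs Sig X) (w, W, B)) := by
  rw [(hasFDerivAt_networkOutputs hSig).fderiv]
  exact trainingJacobian_surjective _ hX hw

end Network

theorem two_layer_network_jacobian_full_rank {M N : ℕ}
    (Sig : (Fin M → ℝ) → Fin M → ℝ) (hSig : ContDiff ℝ 1 Sig)
    (hsub : ∀ z : Fin M → ℝ, Function.Surjective (fderiv ℝ Sig z))
    (X : Matrix (Fin M) (Fin N) ℝ) (hrank : X.rank = N)
    (w : Fin M → ℝ) (hw : w ≠ 0) :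
    ∀ (W : Fin M → Fin M → ℝ) (B : Fin M → ℝ),
      Function.Surjective
        (fderiv ℝ
          (fun p : (Fin M → ℝ) × (Fin M → Fin M → ℝ) × (Fin M → ℝ) =>
            fun i : Fin N =>
              ∑ k, p.1 k * Sig (fun α => (∑ j, p.2.1 α j * X j i) + p.2.2 α) k)
          (w, W, B)) := fun _ _ ↦
  two_layer_network_jacobian_full_rank_general (hrank.trans (Fintype.card_fin N).symm)
    (fun _ ↦ (hSig.differentiable one_ne_zero _).hasFDerivAt)
    (fun _ ↦ dotProductL_comp_ne_zero hw (hsub _))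
end
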